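/- Let S be a linear subspace of Matrix (Fin N) (Fin N) ℂ and let (e_k)_{k ∈ Fin d} and (f_k)_{k ∈ Fin d} be two families in S, each orthonormal with respect to the Frobenius inner product and each spanning S. Then for every x ∈ Matrix (Fin N) (Fin N) ℂ: Σ_k e_k * x * e_kᴴ = Σ_k f_k * x * f_kᴴ. -/

import Mathlib

open Matrix

/-! Fix `x`. The map `(a, b) ↦ a * x * bᴴ` is sesquilinear, so it suffices that `∑ k, Φ (e k) (e k)`
is the same for all orthonormal families with a given span, for any sesquilinear `Φ`. Expanding the
second argument of `Φ (e k) (e k)` in the family `f`, and the first argument of `Φ (f l) (f l)` in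
the family `e`, gives the same double sum `∑ k, ∑ l, ⟨e k, f l⟩ • Φ (e k) (f l)`. -/

section Sesquilinear

variable {R M P ι κ : Type*} [CommSemiring R] [AddCommMonoid M] [Module R M]
  [Fintype ι] [DecidableEq ι] [Fintype κ] [DecidableEq κ]

theorem sum_dual_smul_eq_of_mem_span {e : ι → M} {φ : ι → Module.Dual R M}
    (hφ : ∀ i j, φ i (e j) = if i = j then 1 else 0) {a : M}
    (ha : a ∈ Submodule.span R (Set.range e)) :
    ∑ i, φ i a • e i = a := by
  obtain ⟨c, rfl⟩ := (Submodule.mem_span_range_iff_exists_fun R).1 ha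
  simp [hφ]

theorem sum_sesquilinear_eq_of_orthonormal_of_span_eq [StarRing R] [AddCommMonoid P] [Module R P]
    {B : M →ₗ⋆[R] M →ₗ[R] R} (hB : B.IsSymm) (Φ : M →ₗ[R] M →ₗ⋆[R] P) {e : ι → M} {f : κ → M}
    (he : ∀ i j, B (e i) (e j) = if i = j then 1 else 0)
    (hf : ∀ i j, B (f i) (f j) = if i = j then 1 else 0)
    (hspan : Submodule.span R (Set.range e) = Submodule.span R (Set.range f)) :
    ∑ k, Φ (e k) (e k) = ∑ l, Φ (f l) (f l) := by
  have e_expand (k : ι) : ∑ l, B (f l) (e k) • f l = e k :=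
    sum_dual_smul_eq_of_mem_span hf (hspan ▸ Submodule.subset_span ⟨k, rfl⟩)
  have f_expand (l : κ) : ∑ k, B (e k) (f l) • e k = f l :=
    sum_dual_smul_eq_of_mem_span he (hspan ▸ Submodule.subset_span ⟨l, rfl⟩)
  calc ∑ k, Φ (e k) (e k)
      = ∑ k, Φ (e k) (∑ l, B (f l) (e k) • f l) := by simp only [e_expand]
    _ = ∑ k, ∑ l, B (e k) (f l) • Φ (e k) (f l) := by
        simp only [map_sum, map_smulₛₗ, hB.eq]
    _ = ∑ l, ∑ k, B (e k) (f l) • Φ (e k) (f l) := Finset.sum_comm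
    _ = ∑ l, Φ (∑ k, B (e k) (f l) • e k) (f l) := by
        simp only [map_sum, map_smul, LinearMap.sum_apply, LinearMap.smul_apply]
    _ = ∑ l, Φ (f l) (f l) := by simp only [f_expand]

end Sesquilinear

section Matrix

variable {R m n : Type*} [CommSemiring R] [StarRing R] [Fintype n]

/-- The Frobenius form `(a, b) ↦ Tr(aᴴ * b)` on matrices over a commutative star semiring,
conjugate-linear in the first argument. -/
def frobeniusForm [Fintype m] : Matrix m n R →ₗ⋆[R] Matrix m n R →ₗ[R] R :=
  LinearMap.mk₂'ₛₗ (starRingEnd R) (RingHom.id R) (fun a b => (aᴴ * b).trace)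
    (by simp [Matrix.add_mul]) (by simp [starRingEnd_apply])
    (by simp [Matrix.mul_add]) (by simp)

theorem frobeniusForm_apply [Fintype m] (a b : Matrix m n R) :
    frobeniusForm a b = (aᴴ * b).trace :=
  rfl

theorem frobeniusForm_isSymm [Fintype m] :
    (frobeniusForm : Matrix m n R →ₗ⋆[R] Matrix m n R →ₗ[R] R).IsSymm where
  eq a b := by
    rw [frobeniusForm_apply, frobeniusForm_apply, starRingEnd_apply, ← trace_conjTranspose,
      conjTranspose_mul, conjTranspose_conjTranspose]

/-- The sesquilinear map `(a, b) ↦ a * x * bᴴ`, whose diagonal values are the summands of the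
quantum adjacency map at `x`. -/
def sandwichMap (x : Matrix n n R) : Matrix m n R →ₗ[R] Matrix m n R →ₗ⋆[R] Matrix m m R :=
  LinearMap.mk₂'ₛₗ (RingHom.id R) (starRingEnd R) (fun a b => a * x * bᴴ)
    (by simp [Matrix.add_mul]) (by simp)
    (by simp [Matrix.mul_add]) (by simp [starRingEnd_apply])

theorem stmt_7_general {ι κ : Type*} [Fintype m] [Fintype ι] [DecidableEq ι]
    [Fintype κ] [DecidableEq κ] {e : ι → Matrix m n R} {f : κ → Matrix m n R}
    (he : ∀ k l, ((e k)ᴴ * e l).trace = if k = l then 1 else 0)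
    (hf : ∀ k l, ((f k)ᴴ * f l).trace = if k = l then 1 else 0)
    (hspan : Submodule.span R (Set.range e) = Submodule.span R (Set.range f))
    (x : Matrix n n R) :
    ∑ k, e k * x * (e k)ᴴ = ∑ l, f l * x * (f l)ᴴ :=
  sum_sesquilinear_eq_of_orthonormal_of_span_eq frobeniusForm_isSymm (sandwichMap x) he hf hspan

end Matrix

/-- The quantum adjacency map `x ↦ ∑ k, e k * x * (e k)ᴴ` attached to a subspace
`S` of matrices does not depend on the chosen Frobenius-orthonormal spanning family
of `S`. -/
theorem stmt_7 {N d : ℕ} (S : Submodule ℂ (Matrix (Fin N) (Fin N) ℂ))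
    (e f : Fin d → Matrix (Fin N) (Fin N) ℂ)
    (he_mem : ∀ k, e k ∈ S) (hf_mem : ∀ k, f k ∈ S)
    (he_on : ∀ k l, ((e k)ᴴ * e l).trace = if k = l then 1 else 0)
    (hf_on : ∀ k l, ((f k)ᴴ * f l).trace = if k = l then 1 else 0)
    (he_span : Submodule.span ℂ (Set.range e) = S)
    (hf_span : Submodule.span ℂ (Set.range f) = S) :
    ∀ x : Matrix (Fin N) (Fin N) ℂ,
      ∑ k, e k * x * (e k)ᴴ = ∑ k, f k * x * (f k)ᴴ :=
  stmt_7_general he_on hf_on (he_span.trans hf_span.symm)
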